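/- Let a fusion datum on a countable type I admit a sequence (F_n) of nonempty finite subsets of I such that |∂_γ F_n|_w / |F_n|_w → 0 as n → ∞ for every γ ∈ I. Let A be a nontrivial (1 ≠ 0) unital C*-algebra and let (T_α)_{α∈I} be a CFA-type action of the fusion datum on A. Then there exists a state ψ on A such that ψ(T_α(a)) = (d α)·ψ(a) for every α ∈ I and every a ∈ A (an FA-invariant state). -/

import Mathlib

open scoped BigOperators
open Filter
open scoped Classical

/-- A fusion datum on a type `I`: unit, structure constants, involution and a
dimension function satisfying the unit laws, Frobenius reciprocity and
multiplicativity of the dimension function. -/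
structure FusionDatum (I : Type*) where
  e : I
  N : I → I → I → ℕ
  conj : I → I
  d : I → ℝ
  conj_e : conj e = e
  conj_conj : ∀ α, conj (conj α) = α
  N_conj : ∀ α β γ, N α β γ = N (conj β) (conj α) (conj γ)
  one_le_d : ∀ α, 1 ≤ d α
  d_conj : ∀ α, d (conj α) = d α
  N_unit_left : ∀ α γ, N e α γ = if γ = α then 1 else 0
  N_unit_right : ∀ α γ, N α e γ = if γ = α then 1 else 0
  frobenius₁ : ∀ α β γ, N α β γ = N γ (conj β) α
  frobenius₂ : ∀ α β γ, N α β γ = N (conj α) γ β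
  mul_support_finite : ∀ α β, (Function.support fun γ => (N α β γ : ℝ) * d γ).Finite
  d_mul : ∀ α β, (∑ᶠ γ, (N α β γ : ℝ) * d γ) = d α * d β

/-- Weighted cardinality `|S|_w = Σ_{α∈S} (d α)²` of a set. -/
noncomputable def FusionDatum.wcard {I : Type*} (F : FusionDatum I) (S : Set I) : ℝ :=
  ∑ᶠ α ∈ S, F.d α ^ 2

/-- Right γ-boundary `∂_γ S`. -/
def FusionDatum.rBoundary {I : Type*} (F : FusionDatum I) (γ : I) (S : Set I) : Set I :=
  {α | (α ∈ S ∧ ∃ β ∉ S, 0 < F.N α γ β) ∨ (α ∉ S ∧ ∃ β ∈ S, 0 < F.N α γ β)}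

/-- Left γ-boundary `∂ᴸ_γ S`. -/
def FusionDatum.lBoundary {I : Type*} (F : FusionDatum I) (γ : I) (S : Set I) : Set I :=
  {α | (α ∈ S ∧ ∃ β ∉ S, 0 < F.N γ α β) ∨ (α ∉ S ∧ ∃ β ∈ S, 0 < F.N γ α β)}

/-- ℓ²-norm `(Σ_β |g β|²)^{1/2}` of a (finitely supported) function. -/
noncomputable def l2norm {I : Type*} (g : I → ℂ) : ℝ :=
  Real.sqrt (∑ᶠ β, ‖g β‖ ^ 2)

/-- The convolution operator `l_γ`. -/
noncomputable def FusionDatum.lconv {I : Type*} (F : FusionDatum I) (γ : I) (f : I → ℂ) :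
    I → ℂ :=
  fun β => (1 / (F.d γ : ℂ)) * ∑ᶠ η, (F.N γ η β : ℂ) * f η

/-- A state on a unital C*-algebra: a unital positive linear functional. -/
structure CStarState (A : Type*) [NormedRing A] [StarRing A] [NormedAlgebra ℂ A] where
  toFun : A →ₗ[ℂ] ℂ
  map_one : toFun 1 = 1
  pos : ∀ a : A, 0 ≤ (toFun (star a * a)).re ∧ (toFun (star a * a)).im = 0

/-- A CFA-type action of a fusion datum on a unital C*-algebra: `T α a` encodes `χ(α)·a`. -/
structure CFAAction {I : Type*} (F : FusionDatum I) (A : Type*)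
    [NormedRing A] [StarRing A] [NormedAlgebra ℂ A] where
  T : I → A →ₗ[ℂ] A
  map_star : ∀ α a, T α (star a) = star (T α a)
  norm_le : ∀ α a, ‖T α a‖ ≤ F.d α * ‖a‖
  map_one : ∀ α, T α 1 = (F.d α : ℂ) • (1 : A)
  comp_eq : ∀ α β a, T α (T β a) = ∑ᶠ γ, (F.N α β γ) • T γ a

/-- `⟨f|f⟩_A = Σ_α f α · (f α)*`. -/
noncomputable def innerA {I A : Type*} [NormedRing A] [StarRing A] (f : I → A) : A :=
  ∑ᶠ α, f α * star (f α)

/-- `‖f‖_{2,A} = ‖⟨f|f⟩_A‖^{1/2}`. -/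
noncomputable def norm2A {I A : Type*} [NormedRing A] [StarRing A] (f : I → A) : ℝ :=
  Real.sqrt ‖innerA f‖

/-- Twisted convolution `(δ_γ *_σ f)(β) = (1/(d γ))·Σ_η N γ η β · σ_γ(f η)`. -/
noncomputable def FusionDatum.tconv {I A : Type*} [NormedRing A] [NormedAlgebra ℂ A]
    (F : FusionDatum I) (σ : I → A → A) (γ : I) (f : I → A) : I → A :=
  fun β => (((F.d γ)⁻¹ : ℝ) : ℂ) • ∑ᶠ η, (F.N γ η β) • σ γ (f η)

/-- The ℂ-valued Følner vectors `ξ_F = |F|_w^{-1/2} Σ_{α∈F} d α · δ_α`. -/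
noncomputable def xiC {I : Type*} (F : FusionDatum I) (S : Finset I) : I → ℂ :=
  fun α => if α ∈ S then (((Real.sqrt (F.wcard (S : Set I)))⁻¹ * F.d α : ℝ) : ℂ) else 0

/-- The A-valued Følner vectors `ξ_F = |F|_w^{-1/2} Σ_{α∈F} d α · δ_α ⊗ 1_A`. -/
noncomputable def xiA {I : Type*} (F : FusionDatum I) (S : Finset I)
    (A : Type*) [NormedRing A] [NormedAlgebra ℂ A] : I → A :=
  fun α => if α ∈ S then (((Real.sqrt (F.wcard (S : Set I)))⁻¹ * F.d α : ℝ) : ℂ) • (1 : A)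
    else 0

theorem state_pos_aux {A : Type*} [CStarAlgebra A] [Nontrivial A] (ψ : A →ₗ[ℂ] ℂ)
    (h1 : ψ 1 = 1) (hb : ∀ a, ‖ψ a‖ ≤ ‖a‖) (a : A) :
    0 ≤ (ψ (star a * a)).re ∧ (ψ (star a * a)).im = 0 := by
  letI := CStarAlgebra.spectralOrder A
  haveI := CStarAlgebra.spectralOrderedRing A
  set x : A := star a * a with hx
  have hsa : IsSelfAdjoint x := IsSelfAdjoint.star_mul_self a
  have hx0 : 0 ≤ x := star_mul_self_nonneg a
  constructor
  · have hle : x ≤ algebraMap ℝ A ‖x‖ := hsa.le_algebraMap_norm_self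
    have h2 : ‖algebraMap ℝ A ‖x‖ - x‖ ≤ ‖algebraMap ℝ A ‖x‖‖ :=
      CStarAlgebra.norm_le_norm_of_nonneg_of_le (sub_nonneg.2 hle) (sub_le_self _ hx0)
    have h3 : ‖algebraMap ℝ A ‖x‖‖ = ‖x‖ := by simp
    have h4 : ψ (algebraMap ℝ A ‖x‖) = ((‖x‖ : ℝ) : ℂ) := by
      have : algebraMap ℝ A ‖x‖ = ((‖x‖ : ℝ) : ℂ) • (1 : A) := by
        rw [Algebra.algebraMap_eq_smul_one, Complex.coe_smul]
      rw [this, map_smul, h1, smul_eq_mul, mul_one]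
    have h5 := hb (algebraMap ℝ A ‖x‖ - x)
    rw [map_sub, h4] at h5
    have h6 := Complex.re_le_norm (((‖x‖ : ℝ) : ℂ) - ψ x)
    simp only [Complex.sub_re, Complex.ofReal_re] at h6
    linarith
  · have key : ∀ t : ℝ, 2 * t * (ψ x).im ≤ ‖x‖ ^ 2 := by
      intro t
      have h5 := hb (x + (t * Complex.I) • (1 : A))
      rw [map_add, map_smul, h1, smul_eq_mul, mul_one] at h5
      have h6 : ‖x + (t * Complex.I) • (1 : A)‖ ^ 2 ≤ ‖x‖ ^ 2 + t ^ 2 := by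
        rw [sq, ← CStarRing.norm_star_mul_self]
        have : star (x + (t * Complex.I) • (1 : A)) * (x + (t * Complex.I) • (1 : A))
            = x * x + ((t ^ 2 : ℝ) : ℂ) • (1 : A) := by
          rw [star_add, hsa.star_eq, star_smul, star_one]
          simp only [add_mul, mul_add, smul_mul_assoc, mul_smul_comm, one_mul, mul_one, smul_smul]
          have e1 : star ((t : ℂ) * Complex.I) = -(t * Complex.I) := by simp
          have e2 : -((t : ℂ) * Complex.I) * (t * Complex.I) = ((t ^ 2 : ℝ) : ℂ) := by
            push_cast
            linear_combination (-(t : ℂ) ^ 2) * Complex.I_sq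
          rw [e1]
          rw [← e2]
          module
        rw [this]
        refine (norm_add_le _ _).trans ?_
        refine add_le_add ((norm_mul_le _ _).trans (le_of_eq (sq _).symm)) ?_
        rw [norm_smul, CStarRing.norm_one, mul_one, Complex.norm_real, Real.norm_eq_abs, abs_sq]
      have h7 : ‖ψ x + t * Complex.I‖ ^ 2 ≤ ‖x‖ ^ 2 + t ^ 2 :=
        (pow_le_pow_left₀ (norm_nonneg _) h5 2).trans h6
      rw [← Complex.normSq_eq_norm_sq, Complex.normSq_apply] at h7
      simp at h7
      nlinarith [sq_nonneg (ψ x).re, sq_nonneg (ψ x).im]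
    by_contra hne
    have := key ((‖x‖ ^ 2 + 1) / (2 * (ψ x).im))
    have h8 : 2 * ((‖x‖ ^ 2 + 1) / (2 * (ψ x).im)) * (ψ x).im = ‖x‖ ^ 2 + 1 := by
      field_simp
    linarith

theorem FusionDatum.d_pos {I : Type*} (F : FusionDatum I) (α : I) : 0 < F.d α :=
  lt_of_lt_of_le one_pos (F.one_le_d α)

theorem FusionDatum.N_finite {I : Type*} (F : FusionDatum I) (α β : I) :
    {γ | F.N α β γ ≠ 0}.Finite := by
  refine (F.mul_support_finite α β).subset ?_
  intro γ hγ
  have := (F.d_pos γ).ne'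
  simp only [Set.mem_setOf_eq] at hγ
  simp [hγ, this]

/-- For `β` in the index set, the sum of `d α * N α γ β` over a finite set. -/
theorem FusionDatum.sum_le_aux {I : Type*} (F : FusionDatum I) (γ β : I) (S : Finset I) :
    ∑ α ∈ S, F.d α * (F.N α γ β : ℝ) ≤ F.d β * F.d γ := by
  have hfin := F.mul_support_finite β (F.conj γ)
  have h1 := F.d_mul β (F.conj γ)
  rw [F.d_conj] at h1
  rw [← h1, finsum_eq_sum_of_support_subset (s := S ∪ hfin.toFinset) _ (by simp)]
  calc ∑ α ∈ S, F.d α * (F.N α γ β : ℝ)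
      = ∑ α ∈ S, (F.N β (F.conj γ) α : ℝ) * F.d α := by
        refine Finset.sum_congr rfl fun α _ => ?_
        rw [F.frobenius₁ α γ β, mul_comm]
    _ ≤ _ := by
        refine Finset.sum_le_sum_of_subset_of_nonneg Finset.subset_union_left fun i _ _ => ?_
        have := F.d_pos i
        positivity

theorem FusionDatum.coef_aux {I : Type*} (F : FusionDatum I) (γ β : I) (S : Finset I) :
    |∑ α ∈ S, F.d α * (F.N α γ β : ℝ) - (if β ∈ S then F.d β * F.d γ else 0)|
      ≤ if β ∈ F.rBoundary (F.conj γ) (S : Set I) then F.d β * F.d γ else 0 := by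
  have hle := F.sum_le_aux γ β S
  have h0 : 0 ≤ ∑ α ∈ S, F.d α * (F.N α γ β : ℝ) :=
    Finset.sum_nonneg fun i _ => mul_nonneg (F.d_pos i).le (Nat.cast_nonneg _)
  by_cases hB : β ∈ F.rBoundary (F.conj γ) (S : Set I)
  · rw [if_pos hB, abs_le]
    split_ifs <;> constructor <;> linarith
  · rw [if_neg hB]
    simp only [FusionDatum.rBoundary, Set.mem_setOf_eq, Finset.mem_coe, not_or, not_and,
      not_exists, not_lt, Nat.le_zero] at hB
    by_cases hS : β ∈ S
    · have h2 := hB.1 hS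
      have h1 := F.d_mul β (F.conj γ)
      rw [F.d_conj, finsum_eq_sum_of_support_subset (s := S) _ (by
        intro α hα
        by_contra hc
        exact hα (by simp [h2 α hc]))] at h1
      have : ∑ α ∈ S, F.d α * (F.N α γ β : ℝ) = F.d β * F.d γ := by
        rw [← h1]
        refine Finset.sum_congr rfl fun α _ => ?_
        rw [F.frobenius₁ α γ β, mul_comm]
      simp [hS, this]
    · have h2 := hB.2 hS
      have : ∑ α ∈ S, F.d α * (F.N α γ β : ℝ) = 0 := by
        refine Finset.sum_eq_zero fun α hα => ?_
        rw [F.frobenius₁ α γ β, h2 α hα]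
        simp
      simp [hS, this]

theorem FusionDatum.wcard_finset {I : Type*} (F : FusionDatum I) (S : Finset I) :
    F.wcard (S : Set I) = ∑ α ∈ S, F.d α ^ 2 := by
  unfold FusionDatum.wcard
  exact finsum_mem_coe_finset _ _

theorem FusionDatum.folner_aux {I : Type*} (F : FusionDatum I) {A : Type*}
    [NormedRing A] [StarRing A] [NormedAlgebra ℂ A] (act : CFAAction F A)
    (φ : A →ₗ[ℂ] ℂ) (hφ : ∀ a, ‖φ a‖ ≤ ‖a‖) (γ : I) (S : Finset I) (a : A) :
    ‖∑ α ∈ S, (F.d α : ℂ) * φ (act.T α (act.T γ a))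
      - (F.d γ : ℂ) * ∑ α ∈ S, (F.d α : ℂ) * φ (act.T α a)‖
    ≤ F.d γ * ‖a‖ * F.wcard (F.rBoundary (F.conj γ) (S : Set I)) := by
  set B : Finset I := S ∪ S.biUnion fun α => (F.N_finite α γ).toFinset with hBdef
  have hSB : S ⊆ B := Finset.subset_union_left
  have hbd : F.rBoundary (F.conj γ) (S : Set I) ⊆ B := by
    intro β hβ
    rcases hβ with ⟨h, _⟩ | ⟨h, α, hα, hN⟩
    · exact hSB h
    · rw [hBdef, Finset.coe_union]
      right
      simp only [Finset.mem_coe, Finset.mem_biUnion, Set.Finite.mem_toFinset, Set.mem_setOf_eq]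
      refine ⟨α, hα, ?_⟩
      rw [F.frobenius₁ α γ β]
      exact hN.ne'
  have hw : F.wcard (F.rBoundary (F.conj γ) (S : Set I))
      = ∑ β ∈ B, if β ∈ F.rBoundary (F.conj γ) (S : Set I) then F.d β ^ 2 else 0 := by
    rw [← Finset.sum_filter, ← F.wcard_finset]
    congr 1
    ext β
    simp only [Finset.coe_filter, Set.mem_setOf_eq]
    exact ⟨fun h => ⟨hbd h, h⟩, fun h => h.2⟩
  have hcomp : ∀ α ∈ S, φ (act.T α (act.T γ a))
      = ∑ β ∈ B, (F.N α γ β : ℂ) * φ (act.T β a) := by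
    intro α hα
    rw [act.comp_eq, finsum_eq_sum_of_support_subset (s := B), map_sum]
    · refine Finset.sum_congr rfl fun β _ => ?_
      rw [map_nsmul, nsmul_eq_mul]
    · intro β hβ
      have : F.N α γ β ≠ 0 := fun h => hβ (by simp [h])
      rw [hBdef, Finset.coe_union]
      right
      simp only [Finset.mem_coe, Finset.mem_biUnion, Set.Finite.mem_toFinset, Set.mem_setOf_eq]
      exact ⟨α, hα, this⟩
  have hEq : ∑ α ∈ S, (F.d α : ℂ) * φ (act.T α (act.T γ a))
      - (F.d γ : ℂ) * ∑ α ∈ S, (F.d α : ℂ) * φ (act.T α a)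
      = ∑ β ∈ B, ((∑ α ∈ S, F.d α * (F.N α γ β : ℝ)
          - (if β ∈ S then F.d β * F.d γ else 0) : ℝ) : ℂ) * φ (act.T β a) := by
    have e1 : ∑ α ∈ S, (F.d α : ℂ) * φ (act.T α (act.T γ a))
        = ∑ β ∈ B, (∑ α ∈ S, (F.d α : ℂ) * (F.N α γ β : ℂ)) * φ (act.T β a) := by
      simp_rw [Finset.sum_mul]
      rw [Finset.sum_comm]
      refine Finset.sum_congr rfl fun α hα => ?_
      rw [hcomp α hα, Finset.mul_sum]
      exact Finset.sum_congr rfl fun β _ => by ring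
    have e2 : (F.d γ : ℂ) * ∑ α ∈ S, (F.d α : ℂ) * φ (act.T α a)
        = ∑ β ∈ B, (if β ∈ S then (F.d β : ℂ) * F.d γ else 0) * φ (act.T β a) := by
      rw [Finset.mul_sum, ← Finset.sum_subset hSB]
      · refine Finset.sum_congr rfl fun β hβ => ?_
        rw [if_pos hβ]
        ring
      · intro β _ hβ
        rw [if_neg hβ, zero_mul]
    rw [e1, e2, ← Finset.sum_sub_distrib]
    refine Finset.sum_congr rfl fun β _ => ?_
    rw [← sub_mul]
    congr 1
    split_ifs <;> push_cast <;> rfl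
  rw [hEq, hw, Finset.mul_sum]
  refine norm_sum_le_of_le _ fun β _ => ?_
  rw [norm_mul, Complex.norm_real, Real.norm_eq_abs]
  have hT : ‖φ (act.T β a)‖ ≤ F.d β * ‖a‖ := (hφ _).trans (act.norm_le _ _)
  have hd := F.d_pos β
  have hg := F.d_pos γ
  refine (mul_le_mul (F.coef_aux γ β S) hT (norm_nonneg _) (by split_ifs <;> positivity)).trans ?_
  split_ifs
  · exact le_of_eq (by ring)
  · simp

/-- if the fusion datum admits a right-Følner sequence of nonempty finite
sets and `(T_α)` is a CFA-type action on a nontrivial unital C*-algebra `A`, then there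
is a state `ψ` on `A` with `ψ(T_α a) = d α · ψ(a)` for all `α` and `a`. -/
theorem stmt5 {I : Type*} [Countable I] (F : FusionDatum I) (Fn : ℕ → Finset I)
    (hne : ∀ n, (Fn n).Nonempty)
    (hFol : ∀ γ : I, Tendsto
      (fun n => F.wcard (F.rBoundary γ (Fn n : Set I)) / F.wcard (Fn n : Set I))
      atTop (nhds 0))
    {A : Type*} [NormedRing A] [StarRing A] [CStarRing A] [NormedAlgebra ℂ A]
    [StarModule ℂ A] [CompleteSpace A] [Nontrivial A]
    (act : CFAAction F A) :
    ∃ ψ : CStarState A, ∀ (α : I) (a : A),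
      ψ.toFun (act.T α a) = (F.d α : ℂ) * ψ.toFun a := by
  letI : CStarAlgebra A := {}
  obtain ⟨φ, hφn, hφ1⟩ := exists_dual_vector'' ℂ (1 : A)
  have hφ1' : φ 1 = 1 := by rw [hφ1, CStarRing.norm_one]; simp
  have hφ : ∀ a, ‖φ a‖ ≤ ‖a‖ := fun a =>
    (φ.le_opNorm a).trans (mul_le_of_le_one_left (norm_nonneg _) hφn)
  set W : ℕ → ℝ := fun n => F.wcard (Fn n : Set I) with hW
  have hWs : ∀ n, W n = ∑ α ∈ Fn n, F.d α ^ 2 := fun n => F.wcard_finset _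
  have hWpos : ∀ n, 0 < W n := fun n => by
    rw [hWs]
    exact Finset.sum_pos (fun i _ => pow_pos (F.d_pos i) 2) (hne n)
  let g : ℕ → A → ℂ := fun n a =>
    ((W n)⁻¹ : ℝ) * ∑ α ∈ Fn n, (F.d α : ℂ) * φ (act.T α a)
  have hgb : ∀ n a, ‖g n a‖ ≤ ‖a‖ := by
    intro n a
    have : ‖∑ α ∈ Fn n, (F.d α : ℂ) * φ (act.T α a)‖ ≤ W n * ‖a‖ := by
      rw [hWs, Finset.sum_mul]
      refine norm_sum_le_of_le _ fun α _ => ?_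
      have hd := F.d_pos α
      rw [norm_mul, Complex.norm_real, Real.norm_eq_abs, abs_of_pos hd, sq, mul_assoc]
      exact mul_le_mul_of_nonneg_left ((hφ _).trans (act.norm_le _ _)) hd.le
    simp only [g]
    rw [norm_mul, Complex.norm_real, Real.norm_eq_abs, abs_of_pos (inv_pos.2 (hWpos n)),
      inv_mul_le_iff₀ (hWpos n)]
    exact this
  have hg1 : ∀ n, g n 1 = 1 := by
    intro n
    have : ∑ α ∈ Fn n, (F.d α : ℂ) * φ (act.T α 1) = (W n : ℂ) := by
      rw [hWs]
      push_cast
      refine Finset.sum_congr rfl fun α _ => ?_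
      rw [act.map_one, map_smul, hφ1', smul_eq_mul, mul_one, sq]
    simp only [g]
    rw [this, ← Complex.ofReal_mul, inv_mul_cancel₀ (hWpos n).ne', Complex.ofReal_one]
  let U : Ultrafilter ℕ := Ultrafilter.of atTop
  have hU : (U : Filter ℕ) ≤ atTop := Ultrafilter.of_le _
  have hlim : ∀ a, ∃ z : ℂ, Tendsto (fun n => g n a) U (nhds z) := by
    intro a
    obtain ⟨z, _, hz⟩ := (isCompact_closedBall (0 : ℂ) ‖a‖).ultrafilter_le_nhds
      (U.map fun n => g n a) (by
        rw [le_principal_iff]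
        have hmem : ∀ n, g n a ∈ Metric.closedBall (0 : ℂ) ‖a‖ := fun n => by
          simpa using hgb n a
        exact Filter.mem_map.2 (Filter.univ_mem' hmem))
    exact ⟨z, hz⟩
  choose L hL using hlim
  let ψ : A →ₗ[ℂ] ℂ :=
    { toFun := L
      map_add' := fun a b => by
        refine tendsto_nhds_unique (hL (a + b)) (((hL a).add (hL b)).congr fun n => ?_)
        simp only [g, map_add, mul_add, Finset.sum_add_distrib]
      map_smul' := fun c a => by
        refine tendsto_nhds_unique (hL (c • a)) (((hL a).const_mul c).congr fun n => ?_)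
        simp only [g, map_smul, smul_eq_mul, Finset.mul_sum]
        exact Finset.sum_congr rfl fun α _ => by ring }
  have hψ1 : ψ 1 = 1 :=
    tendsto_nhds_unique (hL 1) (tendsto_const_nhds.congr fun n => (hg1 n).symm)
  have hψb : ∀ a, ‖ψ a‖ ≤ ‖a‖ := fun a =>
    le_of_tendsto (hL a).norm (Filter.Eventually.of_forall fun n => hgb n a)
  refine ⟨⟨ψ, hψ1, state_pos_aux ψ hψ1 hψb⟩, fun γ a => ?_⟩
  change L (act.T γ a) = (F.d γ : ℂ) * L a
  have h1 : Tendsto (fun n => g n (act.T γ a) - (F.d γ : ℂ) * g n a) U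
      (nhds (L (act.T γ a) - (F.d γ : ℂ) * L a)) := (hL _).sub ((hL a).const_mul _)
  have h2 : Tendsto (fun n => g n (act.T γ a) - (F.d γ : ℂ) * g n a) U (nhds 0) := by
    have h3 := ((hFol (F.conj γ)).const_mul (F.d γ * ‖a‖)).mono_left hU
    rw [mul_zero] at h3
    refine squeeze_zero_norm (fun n => ?_) h3
    have h4 := F.folner_aux act φ.toLinearMap hφ γ (Fn n) a
    have h5 : g n (act.T γ a) - (F.d γ : ℂ) * g n a = ((W n)⁻¹ : ℝ) *
        (∑ α ∈ Fn n, (F.d α : ℂ) * φ (act.T α (act.T γ a))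
          - (F.d γ : ℂ) * ∑ α ∈ Fn n, (F.d α : ℂ) * φ (act.T α a)) := by
      simp only [g]
      ring
    rw [h5, norm_mul, Complex.norm_real, Real.norm_eq_abs, abs_of_pos (inv_pos.2 (hWpos n)),
      inv_mul_le_iff₀ (hWpos n)]
    refine h4.trans (le_of_eq ?_)
    have := (hWpos n).ne'
    change _ = W n * (F.d γ * ‖a‖ * (_ / W n))
    field_simp
  exact sub_eq_zero.1 (tendsto_nhds_unique h1 h2)
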